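/- Let 𝕏 be a σ-finite measure space and ℳ, 𝒩 Banach L^0(𝕏)-modules. For every α ∈ ℳ ⊗̂_π 𝒩 it holds that |α|_π = ⋁{ b̃_π(α) : b ∈ B(ℳ,𝒩), |b| ≤ 1 }, where for each b ∈ B(ℳ,𝒩), b̃_π ∈ (ℳ ⊗̂_π 𝒩)* denotes the unique homomorphism with b̃_π(v ⊗ w) = b(v,w) for all v ∈ ℳ, w ∈ 𝒩. -/

import Mathlib

/-!
The supremum is attained, thanks to a Hahn–Banach theorem for Banach `L⁰`-modules: every `p` admits
an `L⁰`-linear `B` with `|B v| ≤ |v|` and `B p = |p|` (`exists_norming`). Restricting such a `B` to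
elementary tensors gives a bilinear map bounded by `1`, because `|v ⊗ w|_π ≤ |v||w|`.

The functional `B` is obtained from the real-linear Hahn–Banach–Kantorovich theorem
(`hb_extension`), which only needs the target `L⁰` to be Dedekind complete (`L0_dedekind`).
Linearity over `L⁰` is then automatic (`map_smul_of_dominated`): the defect
`B (f v) - f B v` is unchanged when a constant `a` is subtracted from `f`, so it is bounded by
`2 |f - a| |v|` for every constant `a`, and hence vanishes.

Conversely, if `b` is bounded by `1`, then `B (e α) ≤ ∑ |v_i||w_i|` for every representation of `α`,
so `B (e α) ≤ |e α|`; density of the image of `e` and boundedness of `B` carry this inequality over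
to all of `P` (`L0_nonpos_of_approx`).
-/

open MeasureTheory Filter Set TensorProduct

noncomputable section

namespace Paper

variable {X : Type*} [MeasurableSpace X]

/-- The space `L⁰(𝕏)` of real-valued measurable functions up to `μ`-a.e. equality. -/
abbrev L0 (μ : Measure X) : Type _ := X →ₘ[μ] ℝ

instance (μ : Measure X) : CommRing (L0 μ) :=
  { (inferInstance : AddCommGroup (L0 μ)), (inferInstance : CommMonoid (L0 μ)) with
    left_distrib := fun a b c => AEEqFun.toGerm_injective <| by
      simp only [AEEqFun.mul_toGerm, AEEqFun.add_toGerm, mul_add]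
    right_distrib := fun a b c => AEEqFun.toGerm_injective <| by
      simp only [AEEqFun.mul_toGerm, AEEqFun.add_toGerm, add_mul]
    zero_mul := fun a => AEEqFun.toGerm_injective <| by
      simp only [AEEqFun.mul_toGerm, AEEqFun.zero_toGerm, zero_mul]
    mul_zero := fun a => AEEqFun.toGerm_injective <| by
      simp only [AEEqFun.mul_toGerm, AEEqFun.zero_toGerm, mul_zero] }

/-- The distance on `L⁰(𝕏)` inducing the topology of convergence in measure, defined through
the auxiliary finite measure `μ.toFinite` (which satisfies `μ ≪ μ.toFinite ≪ μ`). -/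
noncomputable def dL0 (μ : Measure X) [SFinite μ] (f g : L0 μ) : ℝ :=
  ∫ x, min |f x - g x| 1 ∂(μ.toFinite)

/-- A Banach `L⁰(𝕏)`-module: a module over `L⁰(𝕏)` endowed with a pointwise norm, complete
with respect to the induced distance. -/
class BanachMod (μ : Measure X) [SFinite μ] (M : Type*) [AddCommGroup M]
    [Module (L0 μ) M] where
  pn : M → L0 μ
  pn_nonneg : ∀ v : M, 0 ≤ pn v
  pn_eq_zero : ∀ v : M, pn v = 0 ↔ v = 0
  pn_add_le : ∀ v w : M, pn (v + w) ≤ pn v + pn w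
  pn_smul : ∀ (f : L0 μ) (v : M), pn (f • v) = |f| * pn v
  complete : ∀ u : ℕ → M,
    (∀ ε : ℝ, 0 < ε → ∃ N : ℕ, ∀ m ≥ N, ∀ n ≥ N, dL0 μ (pn (u m - u n)) 0 < ε) →
    ∃ v : M, Tendsto (fun n => dL0 μ (pn (u n - v)) 0) atTop (nhds 0)

/-- The pointwise norm of a Banach `L⁰(𝕏)`-module, with the measure explicit. -/
noncomputable def pn (μ : Measure X) [SFinite μ] {M : Type*} [AddCommGroup M]
    [Module (L0 μ) M] [BanachMod μ M] (v : M) : L0 μ :=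
  BanachMod.pn v

/-- The distance on a Banach `L⁰(𝕏)`-module. -/
noncomputable def dM (μ : Measure X) [SFinite μ] {M : Type*} [AddCommGroup M]
    [Module (L0 μ) M] [BanachMod μ M] (v w : M) : ℝ :=
  dL0 μ (pn μ (v - w)) 0

section Defs

variable (μ : Measure X) [SFinite μ]
variable {M N : Type*} [AddCommGroup M] [Module (L0 μ) M] [BanachMod μ M]
  [AddCommGroup N] [Module (L0 μ) N] [BanachMod μ N]

/-- The set of admissible bounds of a map between Banach `L⁰(𝕏)`-modules; the pointwise norm
`|T|` of a homomorphism is the infimum of this set. -/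
def homBddSet (T : M → N) : Set (L0 μ) :=
  {g | 0 ≤ g ∧ ∀ v, pn μ (T v) ≤ g * pn μ v}

/-- A homomorphism of Banach `L⁰(𝕏)`-modules: an `L⁰(𝕏)`-linear map admitting a bound
`g ∈ L⁰(𝕏)⁺` with `|T v| ≤ g |v|` (equivalently, `L⁰(𝕏)`-linear and continuous). -/
def IsHom (T : M →ₗ[L0 μ] N) : Prop :=
  ∃ g, g ∈ homBddSet μ (⇑T)

/-- The set of admissible bounds of an `L⁰(𝕏)`-valued map (for elements of the dual module). -/
def dualBddSet (ω : M → L0 μ) : Set (L0 μ) :=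
  {g | 0 ≤ g ∧ ∀ v, |ω v| ≤ g * pn μ v}

/-- Membership in the dual module `ℳ*`: an `L⁰(𝕏)`-linear map `ω : ℳ → L⁰(𝕏)` admitting a
bound `g ∈ L⁰(𝕏)⁺` with `|ω v| ≤ g |v|`. -/
def IsDual (ω : M →ₗ[L0 μ] L0 μ) : Prop :=
  ∃ g, g ∈ dualBddSet μ (⇑ω)

/-- Membership in the unit disc `𝔻_{ℳ*}` of the dual module: `|ω| ≤ 1`, equivalently
`|ω v| ≤ |v|` for every `v`. -/
def InDualDisc (ω : M →ₗ[L0 μ] L0 μ) : Prop :=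
  ∀ v, |ω v| ≤ pn μ v

/-- The family of pointwise norms `|s - ∑_{i ∈ F ∪ G} v i|` for `G` finite disjoint from `F`,
whose `F`-indexed inf-sup being `0` defines `s = ∑_{i∈I} v i`. -/
def sumUB {I : Type*} (v : I → M) (s : M) (F : Finset I) : Set (L0 μ) :=
  {g | ∃ G : Finset I, Disjoint G F ∧ g = pn μ (s - (∑ i ∈ F, v i + ∑ i ∈ G, v i))}

/-- `HasSumMod μ v s` means that the family `{v_i}` is summable in the Banach `L⁰(𝕏)`-module
with sum `s`, i.e. `⋀_F ⋁_G |s - ∑_{i ∈ F ∪ G} v_i| = 0` (the inner suprema being the values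
of `b`, and the outer infimum being `0`). -/
def HasSumMod {I : Type*} (v : I → M) (s : M) : Prop :=
  ∃ b : Finset I → L0 μ, (∀ F, IsLUB (sumUB μ v s F) (b F)) ∧ IsGLB (Set.range b) 0

/-- A family in a Banach `L⁰(𝕏)`-module is summable if it has a sum. -/
def SummableMod {I : Type*} (v : I → M) : Prop :=
  ∃ s, HasSumMod μ v s

/-- The partial sums `∑_{i ∈ F} |v i|` of the pointwise norms of a family; the element `|v|₁`
of `ℓ₁(I, ℳ)` is the supremum of this set. -/
def l1PartialSums {I : Type*} (v : I → M) : Set (L0 μ) :=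
  {g | ∃ F : Finset I, g = ∑ i ∈ F, pn μ (v i)}

/-- Membership in `ℓ₁(I, ℳ)`: the partial sums of the pointwise norms admit a supremum
(equivalently, an upper bound) in `L⁰(𝕏)`. -/
def Meml1 {I : Type*} (v : I → M) : Prop :=
  ∃ b, IsLUB (l1PartialSums μ v) b

/-- The partial sums `∑_{i ∈ F} |v i|` for an `L⁰(𝕏)`-valued family. -/
def l1PartialSumsF {I : Type*} (v : I → L0 μ) : Set (L0 μ) :=
  {g | ∃ F : Finset I, g = ∑ i ∈ F, |v i|}

/-- Membership in `ℓ₁(I, L⁰(𝕏))`. -/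
def Meml1F {I : Type*} (v : I → L0 μ) : Prop :=
  ∃ b, IsLUB (l1PartialSumsF μ v) b

/-- The set whose infimum defines the projective pointwise norm: all values
`∑_{i=1}^n |v_i||w_i|` over representations `α = ∑_{i=1}^n v_i ⊗ w_i`. -/
def piReps (α : M ⊗[L0 μ] N) : Set (L0 μ) :=
  {g | ∃ (n : ℕ) (v : Fin n → M) (w : Fin n → N),
    α = ∑ i, v i ⊗ₜ[L0 μ] w i ∧ g = ∑ i, pn μ (v i) * pn μ (w i)}

/-- The set whose supremum defines the injective pointwise norm: all values
`|∑_{i=1}^n ω(v_i) η(w_i)|` over representations `α = ∑_{i=1}^n v_i ⊗ w_i` and elements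
`ω ∈ 𝔻_{ℳ*}`, `η ∈ 𝔻_{𝒩*}`. -/
def epsReps (α : M ⊗[L0 μ] N) : Set (L0 μ) :=
  {g | ∃ (n : ℕ) (v : Fin n → M) (w : Fin n → N)
    (ω : M →ₗ[L0 μ] L0 μ) (η : N →ₗ[L0 μ] L0 μ), InDualDisc μ ω ∧ InDualDisc μ η ∧
    α = ∑ i, v i ⊗ₜ[L0 μ] w i ∧ g = |∑ i, ω (v i) * η (w i)|}

/-- `IsPiTensor μ M N P e` states that the Banach `L⁰(𝕏)`-module `P`, together with the
`L⁰(𝕏)`-linear map `e` defined on the algebraic tensor product, realizes the projective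
tensor product `ℳ ⊗̂_π 𝒩`: the pointwise norm of `e α` is the projective pointwise norm
`|α|_π` and the image of `e` is dense. -/
structure IsPiTensor (M N P : Type*) [AddCommGroup M] [Module (L0 μ) M] [BanachMod μ M]
    [AddCommGroup N] [Module (L0 μ) N] [BanachMod μ N]
    [AddCommGroup P] [Module (L0 μ) P] [BanachMod μ P]
    (e : M ⊗[L0 μ] N →ₗ[L0 μ] P) : Prop where
  pn_emb : ∀ α : M ⊗[L0 μ] N, IsGLB (piReps μ α) (pn μ (e α))
  dense : ∀ p : P, ∀ ε : ℝ, 0 < ε → ∃ α : M ⊗[L0 μ] N, dM μ (e α) p < ε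

/-- `IsEpsTensor μ M N P e` states that the Banach `L⁰(𝕏)`-module `P`, together with the
`L⁰(𝕏)`-linear map `e` defined on the algebraic tensor product, realizes the injective
tensor product `ℳ ⊗̂_ε 𝒩`: the pointwise norm of `e α` is the injective pointwise norm
`|α|_ε` and the image of `e` is dense. -/
structure IsEpsTensor (M N P : Type*) [AddCommGroup M] [Module (L0 μ) M] [BanachMod μ M]
    [AddCommGroup N] [Module (L0 μ) N] [BanachMod μ N]
    [AddCommGroup P] [Module (L0 μ) P] [BanachMod μ P]
    (e : M ⊗[L0 μ] N →ₗ[L0 μ] P) : Prop where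
  pn_emb : ∀ α : M ⊗[L0 μ] N, IsLUB (epsReps μ α) (pn μ (e α))
  dense : ∀ p : P, ∀ ε : ℝ, 0 < ε → ∃ α : M ⊗[L0 μ] N, dM μ (e α) p < ε

end Defs

/-! ### Hahn–Banach–Kantorovich extension -/

section HahnBanach

variable {E F : Type*} [AddCommGroup E] [Module ℝ E] [AddCommGroup F] [Module ℝ F]
  [PartialOrder F] [IsOrderedAddMonoid F] [PosSMulMono ℝ F]

/-- One-dimensional extension step: a value `c` at the new vector `y` is admissible as soon as
`f x - q (x - y) ≤ c ≤ q (x + y) - f x` on the domain, and the supremum of the left-hand sides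
is such a value. -/
theorem hb_step (hF : ∀ S : Set F, S.Nonempty → BddAbove S → ∃ s, IsLUB S s)
    (f : E →ₗ.[ℝ] F) (q : E → F) (q_hom : ∀ c : ℝ, 0 < c → ∀ x, q (c • x) = c • q x)
    (q_add : ∀ x y, q (x + y) ≤ q x + q y) (hf : ∀ x : f.domain, f x ≤ q x)
    (hdom : f.domain ≠ ⊤) :
    ∃ g : E →ₗ.[ℝ] F, f < g ∧ ∀ x : g.domain, g x ≤ q x := by
  obtain ⟨y, -, hy⟩ : ∃ y ∈ (⊤ : Submodule ℝ E), y ∉ f.domain :=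
    SetLike.exists_of_lt (lt_top_iff_ne_top.2 hdom)
  have key : ∀ x x' : f.domain, f x - q (x - y) ≤ q (x' + y) - f x' := by
    intro x x'
    rw [sub_le_iff_le_add, sub_add_eq_add_sub, le_sub_iff_add_le, ← f.map_add]
    refine (hf _).trans ?_
    refine le_trans (le_of_eq ?_) (q_add _ _)
    congr 1
    push_cast
    abel
  obtain ⟨c, hc⟩ := hF (Set.range fun x : f.domain => f x - q (x - y)) (Set.range_nonempty _)
    ⟨q ((0 : f.domain) + y) - f 0, by rintro _ ⟨x, rfl⟩; exact key x 0⟩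
  have le_c : ∀ x : f.domain, f x - c ≤ q (x - y) := fun x => by
    have := hc.1 ⟨x, rfl⟩
    exact sub_le_comm.1 this
  have c_le : ∀ x : f.domain, f x + c ≤ q (x + y) := fun x => by
    have : c ≤ q (x + y) - f x := hc.2 (by rintro _ ⟨x', rfl⟩; exact key x' x)
    rw [add_comm]
    exact le_sub_iff_add_le.1 this
  refine ⟨f.supSpanSingleton y c hy, ?_, ?_⟩
  · refine lt_iff_le_not_ge.2 ⟨f.left_le_sup _ _, fun H => ?_⟩
    replace H := LinearPMap.domain_mono.monotone H
    rw [LinearPMap.domain_supSpanSingleton, sup_le_iff, Submodule.span_le,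
      Set.singleton_subset_iff] at H
    exact hy H.2
  · rintro ⟨z, hz⟩
    rcases Submodule.mem_sup.1 hz with ⟨x, hx, y', hy', rfl⟩
    rcases Submodule.mem_span_singleton.1 hy' with ⟨r, rfl⟩
    rw [LinearPMap.supSpanSingleton_apply_mk _ _ _ _ _ hx, RingHom.id_apply]
    rcases lt_trichotomy r 0 with (hr | hr | hr)
    · have h := smul_le_smul_of_nonneg_left (le_c ((-r)⁻¹ • ⟨x, hx⟩)) (neg_pos.2 hr).le
      have hr' : -r ≠ 0 := (neg_pos.2 hr).ne'
      rw [← q_hom _ (neg_pos.2 hr), f.map_smul, smul_sub, smul_smul, mul_inv_cancel₀ hr',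
        one_smul, smul_sub, Submodule.coe_smul, smul_smul, mul_inv_cancel₀ hr', one_smul,
        neg_smul, neg_smul, sub_neg_eq_add, sub_neg_eq_add] at h
      exact h
    · subst r
      simpa using hf ⟨x, hx⟩
    · have h := smul_le_smul_of_nonneg_left (c_le (r⁻¹ • ⟨x, hx⟩)) hr.le
      rw [← q_hom _ hr, f.map_smul, smul_add, smul_smul, mul_inv_cancel₀ hr.ne',
        one_smul, smul_add, Submodule.coe_smul, smul_smul, mul_inv_cancel₀ hr.ne', one_smul] at h
      exact h

/-- **Hahn–Banach–Kantorovich theorem**: the dominated extension theorem for linear maps with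
values in a Dedekind complete ordered real vector space. -/
theorem hb_extension (hF : ∀ S : Set F, S.Nonempty → BddAbove S → ∃ s, IsLUB S s)
    (f : E →ₗ.[ℝ] F) (q : E → F) (q_hom : ∀ c : ℝ, 0 < c → ∀ x, q (c • x) = c • q x)
    (q_add : ∀ x y, q (x + y) ≤ q x + q y) (hf : ∀ x : f.domain, f x ≤ q x) :
    ∃ g : E →ₗ[ℝ] F, (∀ x : f.domain, g x = f x) ∧ ∀ x, g x ≤ q x := by
  set S := { g : E →ₗ.[ℝ] F | ∀ x : g.domain, g x ≤ q x }
  have hSc : ∀ c, c ⊆ S → IsChain (· ≤ ·) c → ∀ y ∈ c, ∃ ub ∈ S, ∀ z ∈ c, z ≤ ub := by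
    intro c hcs c_chain y hy
    have cne : c.Nonempty := ⟨y, hy⟩
    have hcd : DirectedOn (· ≤ ·) c := c_chain.directedOn
    refine ⟨LinearPMap.sSup c hcd, ?_, fun _ ↦ LinearPMap.le_sSup hcd⟩
    rintro ⟨x, hx⟩
    have hdir : DirectedOn (· ≤ ·) (LinearPMap.domain '' c) :=
      directedOn_image.2 (hcd.mono LinearPMap.domain_mono.monotone)
    rcases (Submodule.mem_sSup_of_directed (cne.image _) hdir).1 hx with ⟨_, ⟨g, hgc, rfl⟩, hgx⟩
    have hg : g ≤ LinearPMap.sSup c hcd := LinearPMap.le_sSup _ hgc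
    have heq : g ⟨x, hgx⟩ = LinearPMap.sSup c hcd ⟨x, hx⟩ := hg.2 rfl
    exact heq ▸ hcs hgc ⟨x, hgx⟩
  obtain ⟨g, hfg, hgS, hmax⟩ := zorn_le_nonempty₀ S hSc f hf
  have htop : g.domain = ⊤ := by
    by_contra h
    obtain ⟨r, hgr, hr⟩ := hb_step hF g q q_hom q_add hgS h
    exact hgr.not_ge (hmax hr hgr.le)
  refine ⟨g.toFun.comp (LinearMap.id.codRestrict g.domain fun x => htop ▸ trivial), ?_, ?_⟩
  · exact fun x => (hfg.2 rfl).symm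
  · exact fun x => hgS ⟨x, _⟩

end HahnBanach

/-! ### Order structure of `L⁰` -/

section Order

variable {μ : Measure X}

instance instOrderedAddL0 : IsOrderedAddMonoid (L0 μ) where
  add_le_add_left f g h k := by
    rw [← AEEqFun.coeFn_le] at h ⊢
    filter_upwards [h, AEEqFun.coeFn_add f k, AEEqFun.coeFn_add g k] with x h1 h2 h3
    simp only [h2, h3, Pi.add_apply]
    gcongr

instance instPosSMulMonoL0 : PosSMulMono ℝ (L0 μ) where
  smul_le_smul_of_nonneg_left c hc f g h := by
    rw [← AEEqFun.coeFn_le] at h ⊢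
    filter_upwards [h, AEEqFun.coeFn_smul c f, AEEqFun.coeFn_smul c g] with x h1 h2 h3
    simp only [h2, h3, Pi.smul_apply, smul_eq_mul]
    gcongr

theorem L0_abs_mul (f g : L0 μ) : |f * g| = |f| * |g| := by
  apply AEEqFun.ext
  filter_upwards [AEEqFun.coeFn_mul f g, AEEqFun.coeFn_mul |f| |g|, AEEqFun.coeFn_abs f,
    AEEqFun.coeFn_abs g, AEEqFun.coeFn_abs (f * g)] with x h1 h2 h3 h4 h5
  rw [h5, h1, h2, Pi.mul_apply, Pi.mul_apply, h3, h4, abs_mul]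

/-- The constants, as a ring homomorphism `ℝ → L⁰`. -/
def constHom (μ : Measure X) : ℝ →+* L0 μ where
  toFun c := AEEqFun.const X c
  map_one' := rfl
  map_zero' := rfl
  map_mul' _ _ := rfl
  map_add' _ _ := rfl

theorem coeFn_constHom (c : ℝ) : ⇑(constHom μ c) =ᵐ[μ] fun _ => c := AEEqFun.coeFn_const X c

theorem constHom_mul (c : ℝ) (f : L0 μ) : constHom μ c * f = c • f := by
  apply AEEqFun.ext
  filter_upwards [AEEqFun.coeFn_mul (constHom μ c) f, coeFn_constHom (μ := μ) c,
    AEEqFun.coeFn_smul c f] with x h1 h2 h3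
  simp [h1, h2, h3]

theorem abs_constHom (c : ℝ) : |constHom μ c| = constHom μ |c| := by
  apply AEEqFun.ext
  filter_upwards [AEEqFun.coeFn_abs (constHom μ c), coeFn_constHom (μ := μ) c,
    coeFn_constHom (μ := μ) |c|] with x h1 h2 h3
  simp [h1, h2, h3]

theorem L0_one_nonneg : (0 : L0 μ) ≤ 1 := by
  have h := abs_constHom (μ := μ) 1
  rw [abs_one, map_one] at h
  exact h ▸ abs_nonneg _

theorem ae_toFinite_iff [SFinite μ] {p : X → Prop} :
    (∀ᵐ x ∂μ.toFinite, p x) ↔ ∀ᵐ x ∂μ, p x := by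
  rw [ae_toFinite]

theorem integrable_arctan [SFinite μ] (f : L0 μ) :
    Integrable (fun x => Real.arctan (f x)) μ.toFinite := by
  refine Integrable.of_bound (C := Real.pi / 2)
    (Real.continuous_arctan.measurable.comp f.measurable).aestronglyMeasurable ?_
  refine Filter.Eventually.of_forall fun x => ?_
  rw [Real.norm_eq_abs]
  exact (abs_lt.2 ⟨Real.neg_pi_div_two_lt_arctan _, Real.arctan_lt_pi_div_two _⟩).le

/-- Pointwise suprema of bounded sequences are suprema in `L⁰`. -/
theorem L0_seq_sup (f : ℕ → L0 μ) (u : L0 μ) (hu : ∀ n, f n ≤ u) :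
    ∃ h : L0 μ, IsLUB (Set.range f) h := by
  have hm : Measurable fun x => ⨆ n, f n x := Measurable.iSup fun n => (f n).measurable
  have hcoe := AEEqFun.coeFn_mk (μ := μ) _ hm.aestronglyMeasurable
  refine ⟨AEEqFun.mk _ hm.aestronglyMeasurable, ?_, ?_⟩
  · rintro _ ⟨n, rfl⟩
    rw [← AEEqFun.coeFn_le]
    have hall : ∀ᵐ x ∂μ, ∀ n, f n x ≤ u x := ae_all_iff.2 fun n => AEEqFun.coeFn_le.2 (hu n)
    filter_upwards [hcoe, hall] with x h1 h2
    rw [h1]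
    exact le_ciSup (f := fun n => f n x) ⟨u x, by rintro _ ⟨m, rfl⟩; exact h2 m⟩ n
  · intro v hv
    rw [← AEEqFun.coeFn_le]
    have hall : ∀ᵐ x ∂μ, ∀ n, f n x ≤ v x :=
      ae_all_iff.2 fun n => AEEqFun.coeFn_le.2 (hv ⟨n, rfl⟩)
    filter_upwards [hcoe, hall] with x h1 h2
    rw [h1]
    exact ciSup_le h2

theorem integral_arctan_mono [SFinite μ] {f g : L0 μ} (h : f ≤ g) :
    ∫ x, Real.arctan (f x) ∂μ.toFinite ≤ ∫ x, Real.arctan (g x) ∂μ.toFinite := by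
  refine integral_mono_ae (integrable_arctan f) (integrable_arctan g) (ae_toFinite_iff.2 ?_)
  filter_upwards [AEEqFun.coeFn_le.2 h] with x hx
  exact Real.arctan_strictMono.monotone hx

/-- `f ↦ ∫ arctan f` is strictly monotone on `L⁰`. -/
theorem eq_of_integral_arctan_le [SFinite μ] {f g : L0 μ} (h : f ≤ g)
    (hi : ∫ x, Real.arctan (g x) ∂μ.toFinite ≤ ∫ x, Real.arctan (f x) ∂μ.toFinite) : f = g := by
  have hle : ∀ᵐ x ∂μ.toFinite, f x ≤ g x := ae_toFinite_iff.2 (AEEqFun.coeFn_le.2 h)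
  have hae := (integral_eq_iff_of_ae_le (integrable_arctan f) (integrable_arctan g)
    (hle.mono fun x hx => Real.arctan_strictMono.monotone hx)).1
      (le_antisymm (integral_arctan_mono h) hi)
  refine AEEqFun.ext (ae_toFinite_iff.1 ?_)
  filter_upwards [hae] with x hx
  exact Real.arctan_strictMono.injective hx

/-- `L⁰` of a σ-finite (or s-finite) measure is Dedekind complete. The supremum of `S` maximizes
the strictly monotone bounded functional `f ↦ ∫ arctan f` over the lower bounds of the set of
upper bounds of `S`, a family closed under countable suprema. -/
theorem L0_dedekind [SFinite μ] (S : Set (L0 μ)) (hS : S.Nonempty) (hb : BddAbove S) :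
    ∃ s, IsLUB S s := by
  obtain ⟨u, hu⟩ := hb
  set I : L0 μ → ℝ := fun f => ∫ x, Real.arctan (f x) ∂μ.toFinite with hI
  set L := lowerBounds (upperBounds S) with hL
  have hSL : S ⊆ L := fun f hf g hg => hg hf
  have hne : (I '' L).Nonempty := (hS.mono hSL).image _
  have hbdd : BddAbove (I '' L) := ⟨I u, by
    rintro _ ⟨f, hf, rfl⟩; exact integral_arctan_mono (hf hu)⟩
  obtain ⟨a, -, ha, haL⟩ := exists_seq_tendsto_sSup hne hbdd
  choose f hfL hfa using haL
  obtain ⟨h, hh⟩ := L0_seq_sup f u fun n => hfL n hu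
  have hhL : h ∈ L := fun g hg => hh.2 (by rintro _ ⟨n, rfl⟩; exact hfL n hg)
  have hIh : sSup (I '' L) ≤ I h := by
    refine le_of_tendsto' ha fun n => ?_
    rw [← hfa n]
    exact integral_arctan_mono (hh.1 ⟨n, rfl⟩)
  refine ⟨h, fun g hg => ?_, hhL⟩
  have hsup : h ⊔ g ∈ L := fun k hk => sup_le (hhL hk) (hSL hg hk)
  have : h = h ⊔ g := eq_of_integral_arctan_le le_sup_left
    ((le_csSup hbdd ⟨_, hsup, rfl⟩).trans hIh)
  rw [this]
  exact le_sup_right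

/-- If `k ≤ g u` for elements `u` arbitrarily close to `0` and a fixed `g ≥ 0`, then `k ≤ 0`. -/
theorem L0_nonpos_of_approx [SFinite μ] (k g : L0 μ) (hg : 0 ≤ g)
    (h : ∀ ε : ℝ, 0 < ε → ∃ u : L0 μ, 0 ≤ u ∧ dL0 μ u 0 < ε ∧ k ≤ g * u) : k ≤ 0 := by
  -- The function `φ` is a minorant of `min u 1` that does not depend on `u`.
  set φ : X → ℝ := fun x => min (max (k x) 0 / (1 + |g x|)) 1 with hφ
  have hφ0 : ∀ x, 0 ≤ φ x := fun x => by positivity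
  have hint : ∀ ψ : X → ℝ, Measurable ψ → (∀ x, 0 ≤ ψ x) →
      Integrable (fun x => min (ψ x) 1) μ.toFinite := fun ψ hψ h0 =>
    Integrable.of_bound (C := 1) (hψ.min measurable_const).aestronglyMeasurable
      (Filter.Eventually.of_forall fun x => by
        rw [Real.norm_eq_abs, abs_of_nonneg (le_min (h0 x) zero_le_one)]
        exact min_le_right _ _)
  have hφi : Integrable φ μ.toFinite :=
    hint _ ((k.measurable.max measurable_const).div
      (measurable_const.add g.measurable.abs)) fun x => by positivity
  have hle : ∫ x, φ x ∂μ.toFinite ≤ 0 := by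
    refine le_of_forall_pos_le_add fun ε hε => ?_
    obtain ⟨u, hu0, hud, hku⟩ := h ε hε
    rw [zero_add]
    refine le_trans ?_ hud.le
    refine integral_mono_ae hφi
      (hint _ (u.measurable.sub (0 : L0 μ).measurable).abs fun x => abs_nonneg _)
      (ae_toFinite_iff.2 ?_)
    filter_upwards [AEEqFun.coeFn_le.2 hu0, AEEqFun.coeFn_le.2 hku, AEEqFun.coeFn_le.2 hg,
      AEEqFun.coeFn_mul g u, AEEqFun.coeFn_zero (β := ℝ) (μ := μ)] with x h1 h2 h3 h4 h5
    rw [h4, Pi.mul_apply] at h2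
    rw [h5, Pi.zero_apply] at h1 h3
    simp only [hφ, h5, Pi.zero_apply, sub_zero]
    rw [abs_of_nonneg h1, abs_of_nonneg h3]
    refine min_le_min_right _ ?_
    rw [div_le_iff₀ (by positivity)]
    refine max_le ?_ (by positivity)
    nlinarith
  have hz := (integral_eq_zero_iff_of_nonneg hφ0 hφi).1
    (le_antisymm hle (integral_nonneg hφ0))
  rw [← AEEqFun.coeFn_le]
  filter_upwards [ae_toFinite_iff.1 hz, AEEqFun.coeFn_zero (β := ℝ) (μ := μ)] with x h1 h2
  rw [h2, Pi.zero_apply]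
  by_contra! hk
  have : 0 < φ x := lt_min (div_pos (lt_max_of_lt_left hk) (by positivity)) one_pos
  exact this.ne' h1

end Order

/-! ### Hahn–Banach for Banach `L⁰`-modules -/

section Modules

variable {μ : Measure X} [SFinite μ]
  {P : Type*} [AddCommGroup P] [Module (L0 μ) P] [BanachMod μ P]

theorem pn_neg (v : P) : pn μ (-v) = pn μ v := by
  have h := BanachMod.pn_smul (μ := μ) (constHom μ (-1)) v
  rw [abs_constHom] at h
  simpa [pn] using h

theorem pn_const_smul (c : ℝ) (v : P) : pn μ (constHom μ c • v) = |c| • pn μ v := by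
  rw [← constHom_mul, ← abs_constHom]
  exact BanachMod.pn_smul _ _

/-- A map that is additive, homogeneous under constants and dominated by the pointwise norm is
`L⁰`-linear: the defect `D = T (f v) - f T v` does not change when a constant `a` is subtracted
from `f`, hence `|D| ≤ 2 |f - a| |v|` for all rational `a`. -/
theorem map_smul_of_dominated (T : P → L0 μ) (hadd : ∀ v w, T (v + w) = T v + T w)
    (hc : ∀ (c : ℝ) v, T (constHom μ c • v) = constHom μ c * T v)
    (hT : ∀ v, |T v| ≤ pn μ v) (f : L0 μ) (v : P) : T (f • v) = f * T v := by
  have hbound : ∀ a : ℚ, |T (f • v) - f * T v| ≤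
      |f - constHom μ a| * pn μ v + |f - constHom μ a| * |T v| := by
    intro a
    have hfa : f • v = (f - constHom μ a) • v + constHom μ (a : ℝ) • v := by
      rw [← add_smul, sub_add_cancel]
    have : T (f • v) - f * T v =
        T ((f - constHom μ a) • v) + -((f - constHom μ a) * T v) := by
      rw [hfa, hadd, hc]; ring
    rw [this]
    refine (abs_add_le _ _).trans (add_le_add ((hT _).trans (BanachMod.pn_smul _ _).le) ?_)
    rw [abs_neg, L0_abs_mul]
  rw [← sub_eq_zero]
  have hall := ae_all_iff.2 fun a : ℚ => (AEEqFun.coeFn_le.2 (hbound a)).and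
    ((AEEqFun.coeFn_add (|f - constHom μ a| * pn μ v) (|f - constHom μ a| * |T v|)).and
    ((AEEqFun.coeFn_mul |f - constHom μ a| (pn μ v)).and
    ((AEEqFun.coeFn_mul |f - constHom μ a| |T v|).and
    ((AEEqFun.coeFn_abs (f - constHom μ a)).and
    ((AEEqFun.coeFn_sub f (constHom μ a)).and (coeFn_constHom (μ := μ) a))))))
  apply AEEqFun.ext
  filter_upwards [hall, AEEqFun.coeFn_zero (β := ℝ) (μ := μ),
    AEEqFun.coeFn_abs (T (f • v) - f * T v)] with x hx h0 habs
  rw [h0, Pi.zero_apply, ← abs_eq_zero, ← habs]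
  set d := (|T (f • v) - f * T v| : L0 μ) x
  have hd : 0 ≤ d := by rw [habs]; exact abs_nonneg _
  set A := pn μ v x + (|T v| : L0 μ) x
  have hq : ∀ a : ℚ, d ≤ |f x - a| * A := by
    intro a
    obtain ⟨h1, h2, h3, h4, h5, h6, h7⟩ := hx a
    rw [h2, Pi.add_apply, h3, h4, Pi.mul_apply, Pi.mul_apply, h5, h6, Pi.sub_apply, h7,
      ← mul_add] at h1
    exact h1
  -- Rational constants suffice since the inequality is closed in the constant.
  have hr : ∀ a : ℝ, d ≤ |f x - a| * A := by
    refine fun a => Rat.denseRange_cast.induction_on a ?_ hq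
    exact isClosed_le continuous_const (by fun_prop)
  exact le_antisymm (by simpa using hr (f x)) hd

/-- **Hahn–Banach theorem** for Banach `L⁰`-modules: every vector has a norming functional in
the unit disc of the dual. -/
theorem exists_norming (p : P) :
    ∃ B : P →ₗ[L0 μ] L0 μ, (∀ v, |B v| ≤ pn μ v) ∧ B p = pn μ p := by
  by_cases hp : p = 0
  · refine ⟨0, fun v => ?_, ?_⟩
    · rw [LinearMap.zero_apply, abs_zero]
      exact BanachMod.pn_nonneg v
    · rw [hp, LinearMap.zero_apply]
      exact ((BanachMod.pn_eq_zero (0 : P)).2 rfl).symm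
  let _ : Module ℝ P := Module.compHom P (constHom μ)
  have hsmul : ∀ (c : ℝ) (v : P), c • v = constHom μ c • v := fun _ _ => rfl
  obtain ⟨T, hTf, hT⟩ := hb_extension (F := L0 μ) L0_dedekind
    (LinearPMap.mkSpanSingleton (K := ℝ) p (pn μ p) hp) (pn μ)
    (fun c hc x => by rw [hsmul, pn_const_smul, abs_of_pos hc])
    (fun x y => BanachMod.pn_add_le x y)
    (by
      rintro ⟨x, hx⟩
      obtain ⟨r, rfl⟩ := Submodule.mem_span_singleton.1 hx
      have hval : LinearPMap.mkSpanSingleton (K := ℝ) p (pn μ p) hp ⟨r • p, hx⟩ = r • pn μ p :=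
        LinearPMap.mkSpanSingleton'_apply _ _ _ _ _
      change _ ≤ pn μ (constHom μ r • p)
      rw [hval, pn_const_smul, ← sub_nonneg, ← sub_smul]
      exact smul_nonneg (sub_nonneg.2 (le_abs_self r)) (BanachMod.pn_nonneg p))
  have hTabs : ∀ v, |T v| ≤ pn μ v := fun v => by
    refine abs_le'.2 ⟨hT v, ?_⟩
    rw [← map_neg, ← pn_neg]
    exact hT _
  refine ⟨{ toFun := T, map_add' := T.map_add, map_smul' := fun f v => ?_ }, hTabs, ?_⟩
  · exact map_smul_of_dominated T T.map_add
      (fun c v => by rw [← hsmul, T.map_smul, constHom_mul]) hTabs f v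
  · have := hTf ⟨p, Submodule.mem_span_singleton_self p⟩
    rw [LinearPMap.mkSpanSingleton_apply] at this
    exact this

end Modules

/-- dual representation formula for the projective pointwise norm.
For every `α ∈ ℳ ⊗̂_π 𝒩` it holds `|α|_π = ⋁ { b̃_π(α) : b ∈ B(ℳ,𝒩), |b| ≤ 1 }`, where for
`b ∈ B(ℳ,𝒩)` with `|b| ≤ 1` (i.e. `|b(v,w)| ≤ |v||w|`), `b̃_π ∈ (ℳ ⊗̂_π 𝒩)*` denotes the
unique bounded homomorphism with `b̃_π(v ⊗ w) = b(v,w)`. Here `P` realizes `ℳ ⊗̂_π 𝒩`. -/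
theorem projective_norm_dual_formula
    (μ : Measure X) [SigmaFinite μ]
    (M : Type*) [AddCommGroup M] [Module (L0 μ) M] [BanachMod μ M]
    (N : Type*) [AddCommGroup N] [Module (L0 μ) N] [BanachMod μ N]
    (P : Type*) [AddCommGroup P] [Module (L0 μ) P] [BanachMod μ P]
    (e : M ⊗[L0 μ] N →ₗ[L0 μ] P) (hP : IsPiTensor μ M N P e) (p : P) :
    IsLUB {g : L0 μ | ∃ (b : M →ₗ[L0 μ] N →ₗ[L0 μ] L0 μ) (B : P →ₗ[L0 μ] L0 μ),
      (∀ (v : M) (w : N), |b v w| ≤ pn μ v * pn μ w) ∧ IsDual μ B ∧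
      (∀ (v : M) (w : N), B (e (v ⊗ₜ[L0 μ] w)) = b v w) ∧ g = B p} (pn μ p) := by
  constructor
  · rintro _ ⟨b, B, hb, ⟨g, hg0, hg⟩, hB, rfl⟩
    have hle : ∀ α, B (e α) ≤ pn μ (e α) := by
      intro α
      refine (le_isGLB_iff (hP.pn_emb α)).2 ?_
      rintro _ ⟨n, v, w, rfl, rfl⟩
      rw [map_sum, map_sum]
      refine Finset.sum_le_sum fun i _ => ?_
      rw [hB]
      exact (le_abs_self _).trans (hb _ _)
    rw [← sub_nonpos]
    refine L0_nonpos_of_approx _ (1 + g) ?_ fun ε hε => ?_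
    · exact add_nonneg L0_one_nonneg hg0
    obtain ⟨α, hα⟩ := hP.dense p ε hε
    refine ⟨pn μ (e α - p), BanachMod.pn_nonneg _, hα, ?_⟩
    have h1 : B p = B (e α) + B (p - e α) := by rw [← map_add, add_sub_cancel]
    have h2 : B (p - e α) ≤ g * pn μ (e α - p) := by
      rw [← pn_neg (e α - p), neg_sub]
      exact (le_abs_self _).trans (hg _)
    have h3 : pn μ (e α) ≤ pn μ p + pn μ (e α - p) := by
      have := BanachMod.pn_add_le (μ := μ) p (e α - p)
      rwa [add_sub_cancel] at this
    rw [sub_le_iff_le_add, h1]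
    refine (add_le_add ((hle α).trans h3) h2).trans (le_of_eq ?_)
    ring
  · intro u hu
    obtain ⟨B, hB, hBp⟩ := exists_norming (μ := μ) p
    refine hu ⟨(TensorProduct.mk (L0 μ) M N).compr₂ (B ∘ₗ e), B, fun v w => ?_, ⟨1, L0_one_nonneg, ?_⟩,
      fun v w => rfl, hBp.symm⟩
    · refine (hB _).trans ((hP.pn_emb _).1 ⟨1, fun _ => v, fun _ => w, ?_, ?_⟩) <;> simp
    · intro v
      rw [one_mul]
      exact hB v

end Paper
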